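/- arXiv:2102.02360 — 2 statements merged into one kernel-verified Lean document; each statement's English description precedes it below -/
import Mathlib

section
/- Let q be a real number with q > 0 and q ≠ 1, and let d_0 and d_1 be integers with d_0 > d_1 ≥ 1. Then the (finite) sum over all integers m ≥ 1, all integers n_1 > n_2 > … > n_m > 0, all integers k_1, …, k_m > 0 and k_0 ≥ 0 satisfying k_0 + k_1 + … + k_m = d_1 and n_1 k_1 + … + n_m k_m = d_0 − d_1, of the product [2d_0 choose k_1]_q · [2d_0 − 2(n_1−n_2)k_1 choose k_2]_q ⋯ [2d_0 − 2∑_{j=1}^{m−1}(n_j−n_m)k_j choose k_m]_q · [2d_1 choose k_0]_q, equals ([2d_0]_q/[d_0]_q) · [d_0 choose d_1]_q · [d_0+d_1−1 choose d_0]_q. -/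
attribute [local instance] Classical.propDecidable

/-- The symmetric ("physics convention") `q`-integer `[a]_q = q^{a/2} - q^{-a/2}`. -/
noncomputable def qint (q : ℝ) (a : ℤ) : ℝ :=
  q ^ ((a : ℝ) / 2) - q ^ (-((a : ℝ) / 2))

/-- The `q`-binomial coefficient
`[n choose k]_q = ([n]_q [n-1]_q ⋯ [n-k+1]_q)/([k]_q [k-1]_q ⋯ [1]_q)` for `0 ≤ k ≤ n`,
and `0` otherwise. -/
noncomputable def qbinom (q : ℝ) (n k : ℤ) : ℝ :=
  if 0 ≤ k ∧ k ≤ n then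
    (∏ i ∈ Finset.range k.toNat, qint q (n - (i : ℤ))) /
      ∏ i ∈ Finset.range k.toNat, qint q (k - (i : ℤ))
  else 0

/-!
Record the tuples `n`, `k` by the configuration with `k i` parts on the level `n i` and none on the
other levels. Empty levels only contribute factors `1`, so for a fixed `k₀` the sum over all `m`
becomes a single sum over configurations. In it the parts on the lowest level can be split off:
their `q`-binomial coefficient has upper index `N - 2r`, where `r` is the total height, and
renumbering the levels of the other `b` parts replaces `r` by `r - b`. Since
`2d₀ - 2(d₀ - d₁) = 2d₁`, the sum over `k₀` is one more such step, with `k₀` as the number of parts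
on level `0`. The resulting recursion has a product solution, and its induction step is the
`q`-Pfaff–Saalschütz identity.
-/

section

open Finset

theorem qint_zero (q : ℝ) : qint q 0 = 0 := by simp [qint]

section QInt

variable {q : ℝ}

theorem qint_ne_zero (hq0 : 0 < q) (hq1 : q ≠ 1) {a : ℤ} (ha : a ≠ 0) : qint q a ≠ 0 := by
  intro h
  have hexp : (a : ℝ) / 2 = -((a : ℝ) / 2) := (Real.rpow_right_inj hq0 hq1).1 (sub_eq_zero.1 h)
  have ha' : (a : ℝ) ≠ 0 := Int.cast_ne_zero.2 ha
  exact ha' (by linarith)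

theorem qint_ptolemy (hq0 : 0 < q) (a b c : ℤ) :
    qint q (a + b) * qint q (b + c) =
      qint q a * qint q c + qint q b * qint q (a + b + c) := by
  simp only [qint, Int.cast_add, add_div, neg_add, Real.rpow_add hq0, Real.rpow_neg hq0.le]
  have hpos (x : ℤ) : q ^ ((x : ℝ) / 2) ≠ 0 := (Real.rpow_pos_of_pos hq0 _).ne'
  field_simp [hpos a, hpos b, hpos c]
  ring

end QInt

/-- The symmetric `q`-binomial coefficient `[n]_q ⋯ [n-k+1]_q / ([k]_q ⋯ [1]_q)` with an arbitrary
integer upper index. Unlike `qbinom` it is not set to zero for `n < 0`, so that its recurrences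
in `n` hold without side conditions. -/
noncomputable def gaussBinom (q : ℝ) (n : ℤ) (k : ℕ) : ℝ :=
  ∏ i ∈ range k, qint q (n - i) / qint q (i + 1)

@[simp]
theorem gaussBinom_zero_right (q : ℝ) (n : ℤ) : gaussBinom q n 0 = 1 :=
  prod_range_zero _

theorem gaussBinom_eq_zero_of_lt (q : ℝ) {n : ℤ} {k : ℕ} (hn : 0 ≤ n) (hnk : n < k) :
    gaussBinom q n k = 0 := by
  lift n to ℕ using hn
  refine prod_eq_zero (mem_range.2 (Nat.cast_lt.1 hnk)) ?_
  rw [sub_self, qint_zero, zero_div]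

theorem qbinom_eq_gaussBinom (q : ℝ) {n : ℤ} (hn : 0 ≤ n) (k : ℕ) :
    qbinom q n k = gaussBinom q n k := by
  rw [qbinom]
  split_ifs with h
  · have hden : ∏ i ∈ range k, qint q (k - i) = ∏ i ∈ range k, qint q (i + 1) := by
      rw [← prod_range_reflect]
      refine prod_congr rfl fun i hi => congrArg (qint q) ?_
      have := mem_range.1 hi
      lia
    rw [Int.toNat_natCast, hden, gaussBinom, prod_div_distrib]
  · exact (gaussBinom_eq_zero_of_lt q hn (by lia)).symm

section Recurrences

variable {q : ℝ} (hq0 : 0 < q) (hq1 : q ≠ 1)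

include hq0 hq1

theorem qint_mul_gaussBinom_succ (n : ℤ) (k : ℕ) :
    qint q (k + 1) * gaussBinom q n (k + 1) = qint q (n - k) * gaussBinom q n k := by
  rw [gaussBinom, prod_range_succ, ← gaussBinom]
  field_simp [qint_ne_zero hq0 hq1 (by lia : (k + 1 : ℤ) ≠ 0)]

theorem qint_mul_gaussBinom_add_one_succ (n : ℤ) (k : ℕ) :
    qint q (k + 1) * gaussBinom q (n + 1) (k + 1) = qint q (n + 1) * gaussBinom q n k := by
  induction k with
  | zero => simpa using qint_mul_gaussBinom_succ hq0 hq1 (n + 1) 0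
  | succ k ih =>
    have hk : qint q (k + 1) ≠ 0 := qint_ne_zero hq0 hq1 (by lia)
    have hstep := qint_mul_gaussBinom_succ hq0 hq1 (n + 1) (k + 1)
    rw [show n + 1 - ((k + 1 : ℕ) : ℤ) = n - k by push_cast; ring] at hstep
    apply mul_left_cancel₀ hk
    linear_combination qint q (k + 1) * hstep + qint q (n - k) * ih -
      qint q (n + 1) * qint_mul_gaussBinom_succ hq0 hq1 n k

theorem qint_mul_gaussBinom_add_one (n : ℤ) (k : ℕ) :
    qint q (n + 1 - k) * gaussBinom q (n + 1) k = qint q (n + 1) * gaussBinom q n k := by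
  rw [← qint_mul_gaussBinom_succ hq0 hq1, qint_mul_gaussBinom_add_one_succ hq0 hq1]

theorem gaussBinom_self (n : ℕ) : gaussBinom q n n = 1 := by
  induction n with
  | zero => simp
  | succ n ih =>
    have h := qint_mul_gaussBinom_add_one_succ hq0 hq1 n n
    rw [ih] at h
    push_cast
    exact mul_left_cancel₀ (qint_ne_zero hq0 hq1 (by lia)) h

theorem gaussBinom_symm_add (a b : ℕ) :
    gaussBinom q (a + b) a = gaussBinom q (a + b) b := by
  induction b with
  | zero => simp [gaussBinom_self hq0 hq1]
  | succ b ih =>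
    have ha := qint_mul_gaussBinom_add_one hq0 hq1 (a + b) a
    have hb := qint_mul_gaussBinom_add_one_succ hq0 hq1 (a + b) b
    rw [← ih, ← ha, show (a : ℤ) + b + 1 - a = b + 1 by ring] at hb
    push_cast
    rw [← add_assoc]
    exact (mul_left_cancel₀ (qint_ne_zero hq0 hq1 (by lia)) hb).symm

end Recurrences

/-! ### The `q`-Pfaff–Saalschütz identity -/

/-- The summand of the `q`-Pfaff–Saalschütz sum, which runs over `i + j = n` for a fixed `n`. -/
noncomputable def saalschuetzTerm (q : ℝ) (N r : ℤ) (i j : ℕ) : ℝ :=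
  gaussBinom q (N - r) i * gaussBinom q r (j + 1) * gaussBinom q (N + j) j

section Saalschuetz

variable {q : ℝ} (hq0 : 0 < q) (hq1 : q ≠ 1)

include hq0 hq1

theorem saalschuetzTerm_succ_add_succ (N r : ℤ) (i j : ℕ) :
    qint q (j + 1) * qint q (j + 2) * saalschuetzTerm q N r i (j + 1) +
        qint q (i + 1) * qint q (i + 2 * j + 2) * saalschuetzTerm q N r (i + 1) j =
      qint q (N - 1 - (i + j)) * qint q (r + (i + j) + 1) * saalschuetzTerm q N r i j := by
  have hfirst := qint_mul_gaussBinom_succ hq0 hq1 (N - r) i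
  have hsecond : qint q (j + 2) * gaussBinom q r (j + 1 + 1) =
      qint q (r - j - 1) * gaussBinom q r (j + 1) := by
    convert qint_mul_gaussBinom_succ hq0 hq1 r (j + 1) using 3 <;> push_cast <;> ring
  have hthird : qint q (j + 1) * gaussBinom q (N + (j + 1)) (j + 1) =
      qint q (N + (j + 1)) * gaussBinom q (N + j) j := by
    simpa only [add_assoc] using qint_mul_gaussBinom_add_one_succ hq0 hq1 (N + j) j
  have hptolemy : qint q (N - 1 - (i + j)) * qint q (r + (i + j) + 1) =
      qint q (N - r - i) * qint q (i + 2 * j + 2) + qint q (r - j - 1) * qint q (N + (j + 1)) := by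
    convert qint_ptolemy hq0 (N - r - i) (r - j - 1) (i + 2 * j + 2) using 3 <;> ring_nf
  simp only [saalschuetzTerm, Nat.cast_add, Nat.cast_one]
  linear_combination
    gaussBinom q (N - r) i * qint q (j + 1) * gaussBinom q (N + (j + 1)) (j + 1) * hsecond +
    gaussBinom q (N - r) i * qint q (r - j - 1) * gaussBinom q r (j + 1) * hthird +
    qint q (i + 2 * j + 2) * gaussBinom q r (j + 1) * gaussBinom q (N + j) j * hfirst -
    gaussBinom q (N - r) i * gaussBinom q r (j + 1) * gaussBinom q (N + j) j * hptolemy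

/-- Ptolemy's identity splits `[n+1][n+2]` into two products, each of which lowers one of the two
summation indices. -/
theorem qint_mul_sum_saalschuetzTerm_succ (N r : ℤ) (n : ℕ) :
    qint q (n + 1) * qint q (n + 2) * ∑ p ∈ antidiagonal (n + 1), saalschuetzTerm q N r p.1 p.2 =
      qint q (N - 1 - n) * qint q (r + n + 1) *
        ∑ p ∈ antidiagonal n, saalschuetzTerm q N r p.1 p.2 := by
  have hsplit : ∀ p ∈ antidiagonal (n + 1),
      qint q (n + 1) * qint q (n + 2) * saalschuetzTerm q N r p.1 p.2 =
        qint q p.2 * qint q (p.2 + 1) * saalschuetzTerm q N r p.1 p.2 +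
          qint q p.1 * qint q (p.1 + 2 * p.2 + 1) * saalschuetzTerm q N r p.1 p.2 := by
    intro p hp
    have hn : (n : ℤ) + 1 = p.2 + p.1 := by have := mem_antidiagonal.1 hp; lia
    rw [show (n : ℤ) + 2 = p.1 + (p.2 + 1) by lia, hn, qint_ptolemy hq0, add_mul]
    ring_nf
  rw [mul_sum, sum_congr rfl hsplit, sum_add_distrib, Nat.sum_antidiagonal_succ',
    Nat.sum_antidiagonal_succ, mul_sum]
  simp only [Nat.cast_zero, qint_zero, zero_mul, zero_add]
  rw [← sum_add_distrib]
  refine sum_congr rfl fun p hp => ?_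
  have hn : (n : ℤ) = p.1 + p.2 := by have := mem_antidiagonal.1 hp; lia
  rw [hn, ← saalschuetzTerm_succ_add_succ hq0 hq1]
  push_cast
  ring_nf

theorem sum_antidiagonal_saalschuetzTerm (N r : ℤ) (n : ℕ) :
    ∑ p ∈ antidiagonal n, saalschuetzTerm q N r p.1 p.2 =
      gaussBinom q (N - 1) n * gaussBinom q (r + n) (n + 1) := by
  induction n with
  | zero => simp [saalschuetzTerm]
  | succ n ih =>
    have hrec := qint_mul_sum_saalschuetzTerm_succ hq0 hq1 N r n
    have hleft := qint_mul_gaussBinom_succ hq0 hq1 (N - 1) n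
    have hright := qint_mul_gaussBinom_add_one_succ hq0 hq1 (r + n) (n + 1)
    rw [ih] at hrec
    push_cast at hright ⊢
    rw [show (n : ℤ) + 1 + 1 = n + 2 by ring] at hright
    rw [← add_assoc]
    have hn1 : qint q (n + 1) ≠ 0 := qint_ne_zero hq0 hq1 (by lia)
    have hn2 : qint q (n + 2) ≠ 0 := qint_ne_zero hq0 hq1 (by lia)
    apply mul_left_cancel₀ (mul_ne_zero hn1 hn2)
    linear_combination hrec -
      qint q (n + 2) * gaussBinom q (r + n + 1) (n + 1 + 1) * hleft -
      qint q (N - 1 - n) * gaussBinom q (N - 1) n * hright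

end Saalschuetz

/-! ### Configurations of parts on levels -/

/-- The weight of a configuration `κ` of `κ x` parts on each level `x < L`: a product of
`q`-binomial coefficients whose upper indices drop from `N` by twice the total height of the parts
above the level in question. It is the summand of the multiple sum, with levels that carry no part
included as trivial factors. -/
noncomputable def levelWeight (q : ℝ) (N : ℤ) {L : ℕ} (κ : Fin L → ℕ) : ℝ :=
  ∏ x : Fin L, gaussBinom q (N - 2 * ∑ y ∈ Ioi x, ((y : ℤ) - (x : ℤ)) * κ y) (κ x)

/-- The configurations of `a` parts on the levels `0, …, L - 1` with total height `r`. -/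
noncomputable def levelConfigs (L a : ℕ) (r : ℤ) : Finset (Fin L → ℕ) :=
  {κ ∈ Nat.antidiagonalTuple L a | ∑ x : Fin L, (x : ℤ) * κ x = r}

/-- The multiple sum, re-encoded as a sum over multiplicities of levels. -/
noncomputable def levelSum (q : ℝ) (N : ℤ) (L a : ℕ) (r : ℤ) : ℝ :=
  ∑ κ ∈ levelConfigs L a r, levelWeight q N κ

theorem mem_levelConfigs {L a : ℕ} {r : ℤ} {κ : Fin L → ℕ} :
    κ ∈ levelConfigs L a r ↔ ∑ x, κ x = a ∧ ∑ x : Fin L, (x : ℤ) * κ x = r := by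
  rw [levelConfigs, mem_filter, Nat.mem_antidiagonalTuple]

theorem levelWeight_cons (q : ℝ) (N : ℤ) (k : ℕ) {L : ℕ} (κ : Fin L → ℕ) :
    levelWeight q N (Fin.cons k κ : Fin (L + 1) → ℕ) =
      gaussBinom q (N - 2 * ∑ x : Fin L, ((x : ℤ) + 1) * κ x) k * levelWeight q N κ := by
  simp [levelWeight, Fin.prod_univ_succ, Fin.sum_Ioi_succ]

theorem sum_antidiagonalTuple_succ {M : Type*} [AddCommMonoid M] (L a : ℕ)
    (f : (Fin (L + 1) → ℕ) → M) :
    ∑ κ ∈ Nat.antidiagonalTuple (L + 1) a, f κ =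
      ∑ p ∈ antidiagonal a, ∑ κ ∈ Nat.antidiagonalTuple L p.2, f (Fin.cons p.1 κ) := by
  rw [sum_sigma']
  refine sum_bij' (fun κ _ => ⟨(κ 0, ∑ x, Fin.tail κ x), Fin.tail κ⟩)
    (fun s _ => Fin.cons s.1.1 s.2) ?_ ?_ ?_ ?_ ?_ <;>
  simp only [mem_sigma, HasAntidiagonal.mem_antidiagonal, Nat.mem_antidiagonalTuple]
  · intro κ hκ
    simpa [Fin.sum_univ_succ, Fin.tail] using hκ
  · rintro ⟨⟨k, b⟩, κ⟩ ⟨hkb, hκ⟩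
    simpa [Fin.sum_univ_succ, hκ] using hkb
  · simp
  · rintro ⟨⟨k, b⟩, κ⟩ ⟨-, hκ⟩
    simp_all
  · simp

theorem sum_cast_add_one_mul {L : ℕ} (κ : Fin L → ℕ) :
    ∑ x : Fin L, ((x : ℤ) + 1) * κ x = ∑ x : Fin L, (x : ℤ) * κ x + ∑ x, κ x := by
  simp [add_mul, sum_add_distrib]

/-- Removing the parts on level `0` and renumbering the levels lowers every other part by one. -/
theorem levelSum_succ (q : ℝ) (N : ℤ) (L a : ℕ) (r : ℤ) :
    levelSum q N (L + 1) a r =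
      ∑ p ∈ antidiagonal a, gaussBinom q (N - 2 * r) p.1 * levelSum q N L p.2 (r - p.2) := by
  rw [levelSum, levelConfigs, sum_filter, sum_antidiagonalTuple_succ]
  refine sum_congr rfl fun p _ => ?_
  rw [levelSum, levelConfigs, sum_filter, mul_sum]
  refine sum_congr rfl fun κ hκ => ?_
  have hparts : ∑ x, (κ x : ℤ) = p.2 := by exact_mod_cast Nat.mem_antidiagonalTuple.1 hκ
  have hheight : ∑ x : Fin (L + 1), (x : ℤ) * (Fin.cons p.1 κ : Fin (L + 1) → ℕ) x =
      ∑ x : Fin L, ((x : ℤ) + 1) * κ x := by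
    simp [Fin.sum_univ_succ]
  rw [levelWeight_cons, hheight, mul_ite, mul_zero]
  have hcond : ∑ x : Fin L, ((x : ℤ) + 1) * κ x = r ↔ ∑ x : Fin L, (x : ℤ) * κ x = r - p.2 := by
    rw [sum_cast_add_one_mul, Nat.cast_sum, hparts, eq_sub_iff_add_eq]
  exact ite_congr (propext hcond) (fun h => by rw [hcond.2 h]) fun _ => rfl

theorem levelSum_of_neg (q : ℝ) (N : ℤ) (L a : ℕ) {r : ℤ} (hr : r < 0) :
    levelSum q N L a r = 0 := by
  refine sum_eq_zero fun κ hκ => absurd (mem_levelConfigs.1 hκ).2 (ne_of_gt (hr.trans_le ?_))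
  positivity

theorem levelSum_zero (q : ℝ) (N : ℤ) (L : ℕ) (r : ℤ) :
    levelSum q N L 0 r = if r = 0 then 1 else 0 := by
  rw [levelSum, levelConfigs, Nat.antidiagonalTuple_zero_right, sum_filter, sum_singleton]
  simp [levelWeight, eq_comm]

theorem levelSum_succ_zero_right (q : ℝ) (N : ℤ) (L a : ℕ) :
    levelSum q N (L + 1) a 0 = gaussBinom q N a := by
  rw [levelSum_succ, sum_eq_single (a, 0)]
  · simp [levelSum_zero]
  · intro p hp hne
    have hpos : 0 < p.2 := by
      rw [HasAntidiagonal.mem_antidiagonal] at hp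
      contrapose! hne
      ext <;> lia
    rw [levelSum_of_neg q N L p.2 (by lia), mul_zero]
  · simp

section ClosedForm

variable {q : ℝ} (hq0 : 0 < q) (hq1 : q ≠ 1)

include hq0 hq1

theorem gaussBinom_sub_one_div_qint {n : ℤ} (hn : n ≠ 0) (k : ℕ) :
    gaussBinom q (n - 1) k / qint q (k + 1) = gaussBinom q n (k + 1) / qint q n := by
  have h := qint_mul_gaussBinom_add_one_succ hq0 hq1 (n - 1) k
  rw [sub_add_cancel] at h
  rw [div_eq_div_iff (qint_ne_zero hq0 hq1 (by lia)) (qint_ne_zero hq0 hq1 hn)]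
  linear_combination -h

/-- For `r < 0` both sides vanish, the right one because its last upper index drops below `n`. This
is what lets the recursion below refer to the formula for all `j`, even if `r < j + 1`. -/
theorem levelSum_eq (N : ℤ) {L n : ℕ} {r : ℤ} (hrL : r < L) (hnr : 0 ≤ n + r) :
    levelSum q N L (n + 1) r =
      qint q N * gaussBinom q (N - r - 1) n * (gaussBinom q (n + r) n / qint q (n + 1)) := by
  induction L generalizing n r with
  | zero =>
    rw [levelSum_of_neg q N 0 _ hrL, gaussBinom_eq_zero_of_lt q hnr (by lia), zero_div, mul_zero]
  | succ L ih =>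
    have hn : qint q (n + 1) ≠ 0 := qint_ne_zero hq0 hq1 (by lia)
    rcases lt_trichotomy r 0 with hr | rfl | hr
    · rw [levelSum_of_neg q N _ _ hr, gaussBinom_eq_zero_of_lt q hnr (by lia), zero_div, mul_zero]
    · have h := qint_mul_gaussBinom_add_one_succ hq0 hq1 (N - 1) n
      rw [sub_add_cancel] at h
      rw [levelSum_succ_zero_right, add_zero, gaussBinom_self hq0 hq1, sub_zero, ← h]
      field_simp
    · have hr0 : qint q r ≠ 0 := qint_ne_zero hq0 hq1 hr.ne'
      have hterm : ∀ p ∈ antidiagonal n,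
          gaussBinom q (N - 2 * r) p.1 * levelSum q N L (p.2 + 1) (r - (p.2 + 1 : ℕ)) =
            qint q N / qint q r * saalschuetzTerm q (N - r) r p.1 p.2 := by
        intro p _
        have h := gaussBinom_sub_one_div_qint hq0 hq1 hr.ne' p.2
        rw [ih (by lia) (by lia), saalschuetzTerm]
        push_cast
        rw [show (p.2 : ℤ) + (r - (p.2 + 1)) = r - 1 by ring, h,
          show N - (r - ((p.2 : ℤ) + 1)) - 1 = N - r + p.2 by ring,
          show N - 2 * r = N - r - r by ring]
        ring
      have h := qint_mul_gaussBinom_succ hq0 hq1 (n + r) n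
      rw [add_sub_cancel_left] at h
      rw [levelSum_succ, Nat.sum_antidiagonal_succ', levelSum_zero, if_neg (by simpa using hr.ne'),
        mul_zero, zero_add, sum_congr rfl hterm, ← mul_sum,
        sum_antidiagonal_saalschuetzTerm hq0 hq1, add_comm r]
      field_simp
      linear_combination qint q N * gaussBinom q (N - r - 1) n * h

theorem levelSum_two_mul {L : ℕ} (hL : 0 < L) (n : ℕ) :
    levelSum q (2 * L) (L + 1) (n + 1) (L - (n + 1)) =
      qint q (2 * L) / qint q L * gaussBinom q L (n + 1) * gaussBinom q (L + n) L := by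
  have h := gaussBinom_sub_one_div_qint hq0 hq1 (n := L) (by lia) n
  rw [levelSum_eq hq0 hq1 _ (by lia) (by lia), show (n : ℤ) + (L - (n + 1)) = L - 1 by ring, h,
    show 2 * (L : ℤ) - (L - (n + 1)) - 1 = L + n by ring, gaussBinom_symm_add hq0 hq1]
  ring

end ClosedForm

/-! ### Decreasing enumerations of supports -/

section Extend

open Function

variable {ι α M : Type*} [Zero M]

@[to_additive]
theorem prod_extend_zero {R : Type*} [Fintype ι] [Fintype α] [CommMonoid R] {e : ι → α}
    (he : Injective e) (k : ι → M) {g : α → M → R} (hg : ∀ x, g x 0 = 1) :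
    ∏ x, g x (extend e k 0 x) = ∏ i, g (e i) (k i) := by
  refine (Fintype.prod_of_injective e he _ _ (fun x hx => ?_) fun i => ?_).symm
  · rw [extend_apply' _ _ _ hx, Pi.zero_apply, hg]
  · rw [he.extend_apply]

theorem support_extend_zero_eq_range {e : ι → α} (he : Injective e) {k : ι → M}
    (hk : ∀ i, k i ≠ 0) : support (extend e k 0) = Set.range e := by
  have hsupp : support k = Set.univ := Set.eq_univ_of_forall hk
  rw [support_extend_zero he, hsupp, Set.image_univ]

variable [LinearOrder α] {m : ℕ}

theorem eq_of_extend_eq_of_strictAnti {e e' : Fin m → α} {k k' : Fin m → M} (he : StrictAnti e)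
    (he' : StrictAnti e') (hk : ∀ i, k i ≠ 0) (hk' : ∀ i, k' i ≠ 0)
    (h : extend e k 0 = extend e' k' 0) : e = e' ∧ k = k' := by
  have hrange := congrArg support h
  rw [support_extend_zero_eq_range he.injective hk,
    support_extend_zero_eq_range he'.injective hk', he.range_inj he'] at hrange
  subst hrange
  exact ⟨rfl, extend_injective he.injective _ h⟩

variable [Fintype α] [DecidableEq M]

theorem exists_strictAnti_extend_eq {κ : α → M} (hκ : #{x | κ x ≠ 0} = m) :
    ∃ (e : Fin m → α) (k : Fin m → M), StrictAnti e ∧ (∀ i, k i ≠ 0) ∧ extend e k 0 = κ := by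
  let e := ({x | κ x ≠ 0} : Finset α).orderEmbOfFin hκ ∘ Fin.rev
  have he : StrictAnti e := (OrderEmbedding.strictMono _).comp_strictAnti Fin.rev_strictAnti
  have hrange : Set.range e = support κ := by
    rw [Fin.rev_surjective.range_comp, range_orderEmbOfFin]
    ext
    simp
  refine ⟨e, κ ∘ e, he, fun i => ?_, ?_⟩
  · exact (hrange ▸ Set.mem_range_self i : e i ∈ support κ)
  · ext x
    by_cases hx : x ∈ Set.range e
    · obtain ⟨i, rfl⟩ := hx
      rw [he.injective.extend_apply, comp_apply]
    · rw [extend_apply' _ _ _ hx, Pi.zero_apply]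
      rw [hrange, notMem_support] at hx
      exact hx.symm

/-- A function with `m` nonzero values is the same as the decreasing enumeration of its support
together with its values there. -/
theorem sum_extend_of_strictAnti {R : Type*} [AddCommMonoid R]
    {P : Finset ((Fin m → α) × (Fin m → M))} {Q : Finset (α → M)}
    (hP : ∀ e k, (e, k) ∈ P ↔ StrictAnti e ∧ (∀ i, k i ≠ 0) ∧ extend e k 0 ∈ Q)
    (f : (α → M) → R) :
    ∑ p ∈ P, f (extend p.1 p.2 0) = ∑ κ ∈ Q with #{x | κ x ≠ 0} = m, f κ := by
  refine sum_nbij (fun p => extend p.1 p.2 0) ?_ ?_ ?_ fun _ _ => rfl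
  · rintro ⟨e, k⟩ hp
    obtain ⟨he, hk, hQ⟩ := (hP e k).1 hp
    have hsupp : ({x | extend e k 0 x ≠ 0} : Finset α) = univ.image e := by
      rw [← coe_inj, coe_image, coe_univ, Set.image_univ,
        ← support_extend_zero_eq_range he.injective hk, coe_filter_univ]
      rfl
    rw [mem_filter, hsupp, card_image_of_injective _ he.injective, card_univ, Fintype.card_fin]
    exact ⟨hQ, rfl⟩
  · rintro ⟨e, k⟩ hp ⟨e', k'⟩ hp' h
    obtain ⟨he, hk, -⟩ := (hP e k).1 hp
    obtain ⟨he', hk', -⟩ := (hP e' k').1 hp'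
    exact Prod.ext_iff.2 (eq_of_extend_eq_of_strictAnti he he' hk hk' h)
  · intro κ hκ
    obtain ⟨hQ, hcard⟩ := mem_filter.1 hκ
    obtain ⟨e, k, he, hk, rfl⟩ := exists_strictAnti_extend_eq hcard
    exact ⟨(e, k), (hP e k).2 ⟨he, hk, hQ⟩, rfl⟩

end Extend

/-! ### Configurations as pairs of tuples -/

section Tuples

open Function

/-- The pairs `(n, k)` of `m`-tuples with entries in `[1, K]` for which `n` is strictly decreasing,
the `k i` have sum `b` and the products `n i * k i` have sum `r`: the index set of the multiple
sum for fixed `m` and `k₀`. -/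
noncomputable def levelTuples (m : ℕ) (K b r : ℤ) : Finset ((Fin m → ℤ) × (Fin m → ℤ)) :=
  {p ∈ Fintype.piFinset (fun _ => Icc 1 K) ×ˢ Fintype.piFinset (fun _ => Icc 1 K) |
    StrictAnti p.1 ∧ ∑ i, p.2 i = b ∧ ∑ i, p.1 i * p.2 i = r}

/-- The summand of the multiple sum for `n_1 > ⋯ > n_m` and `k_1, …, k_m`, without the factor that
belongs to `k₀`. -/
noncomputable def tupleWeight (q : ℝ) (N : ℤ) {m : ℕ} (n k : Fin m → ℤ) : ℝ :=
  ∏ i, qbinom q (N - 2 * ∑ j with j < i, (n j - n i) * k j) (k i)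

/-- The tuples `(n, k)` that describe `k i` parts on the level `e i`. The levels are counted from
`0`, whereas the entries of `n` are positive. -/
def levelTuple {L m : ℕ} (p : (Fin m → Fin L) × (Fin m → ℕ)) : (Fin m → ℤ) × (Fin m → ℤ) :=
  (fun i => (p.1 i : ℤ) + 1, fun i => (p.2 i : ℤ))

theorem strictAnti_levelTuple_fst {L m : ℕ} {p : (Fin m → Fin L) × (Fin m → ℕ)} :
    StrictAnti (levelTuple p).1 ↔ StrictAnti p.1 := by
  simp [levelTuple, StrictAnti]

theorem mem_levelTuples {m : ℕ} {K b r : ℤ} {p : (Fin m → ℤ) × (Fin m → ℤ)} :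
    p ∈ levelTuples m K b r ↔ (∀ i, p.1 i ∈ Icc 1 K) ∧ (∀ i, p.2 i ∈ Icc 1 K) ∧
      StrictAnti p.1 ∧ ∑ i, p.2 i = b ∧ ∑ i, p.1 i * p.2 i = r := by
  simp only [levelTuples, mem_filter, mem_product, Fintype.mem_piFinset, and_assoc]

theorem sum_sub_mul_le_of_mem_levelTuples {m : ℕ} {K b r : ℤ} {p : (Fin m → ℤ) × (Fin m → ℤ)}
    (hp : p ∈ levelTuples m K b r) (i : Fin m) :
    ∑ j with j < i, (p.1 j - p.1 i) * p.2 j ≤ r := by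
  obtain ⟨hn, hk, -, -, hr⟩ := mem_levelTuples.1 hp
  have hn_nonneg (j : Fin m) : 0 ≤ p.1 j := zero_le_one.trans (mem_Icc.1 (hn j)).1
  have hk_nonneg (j : Fin m) : 0 ≤ p.2 j := zero_le_one.trans (mem_Icc.1 (hk j)).1
  calc ∑ j with j < i, (p.1 j - p.1 i) * p.2 j
      ≤ ∑ j with j < i, p.1 j * p.2 j :=
        sum_le_sum fun j _ => mul_le_mul_of_nonneg_right (sub_le_self _ (hn_nonneg i)) (hk_nonneg j)
    _ ≤ ∑ j, p.1 j * p.2 j :=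
        sum_le_univ_sum_of_nonneg fun j => mul_nonneg (hn_nonneg j) (hk_nonneg j)
    _ = r := hr

theorem levelTuple_injective {L m : ℕ} :
    Injective (levelTuple : (Fin m → Fin L) × (Fin m → ℕ) → _) := by
  rintro ⟨e, k⟩ ⟨e', k'⟩ h
  obtain ⟨he, hk⟩ := Prod.ext_iff.1 h
  simp only [levelTuple, funext_iff, add_left_inj, Nat.cast_inj, Fin.val_inj] at he hk
  exact Prod.ext (funext he) (funext hk)

theorem mem_range_levelTuple {L m : ℕ} {b r : ℤ} {p : (Fin m → ℤ) × (Fin m → ℤ)}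
    (hp : p ∈ levelTuples m L b r) :
    p ∈ Set.range (levelTuple : (Fin m → Fin L) × (Fin m → ℕ) → _) := by
  obtain ⟨hn, hk, -⟩ := mem_levelTuples.1 hp
  simp only [mem_Icc] at hn hk
  refine ⟨(fun i => ⟨(p.1 i - 1).toNat, by have := hn i; lia⟩, fun i => (p.2 i).toNat), ?_⟩
  refine Prod.ext (funext fun i => ?_) (funext fun i => ?_)
  · have := hn i
    simp only [levelTuple]
    lia
  · have := hk i
    simp only [levelTuple]
    lia

theorem extend_mem_levelConfigs {L m a : ℕ} {r : ℤ} {e : Fin m → Fin L} (he : Injective e)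
    {k : Fin m → ℕ} :
    extend e k 0 ∈ levelConfigs L a r ↔ ∑ i, k i = a ∧ ∑ i, (e i : ℤ) * k i = r := by
  rw [mem_levelConfigs, sum_extend_zero he k (g := fun _ c => c) fun _ => rfl,
    sum_extend_zero he k (g := fun x c => (x : ℤ) * c) fun _ => by simp]

theorem levelTuple_mem_levelTuples {L m b : ℕ} {r : ℤ} (hbL : b ≤ L) {e : Fin m → Fin L}
    {k : Fin m → ℕ} :
    levelTuple (e, k) ∈ levelTuples m L b r ↔
      StrictAnti e ∧ (∀ i, k i ≠ 0) ∧ extend e k 0 ∈ levelConfigs L b (r - b) := by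
  have hparts : ∑ i, (levelTuple (e, k)).2 i = b ↔ ∑ i, k i = b := by
    simp only [levelTuple]
    norm_cast
  have hheight : ∑ i, (levelTuple (e, k)).1 i * (levelTuple (e, k)).2 i =
      ∑ i, (e i : ℤ) * k i + ∑ i, k i := by
    simp [levelTuple, add_mul, sum_add_distrib]
  rw [mem_levelTuples, strictAnti_levelTuple_fst, hparts, hheight]
  constructor
  · rintro ⟨-, hk, he, hb, hr⟩
    refine ⟨he, fun i => ?_, (extend_mem_levelConfigs he.injective).2 ⟨hb, by lia⟩⟩
    have := mem_Icc.1 (hk i)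
    simp only [levelTuple] at this
    lia
  · rintro ⟨he, hk, hconf⟩
    obtain ⟨hb, hr⟩ := (extend_mem_levelConfigs he.injective).1 hconf
    refine ⟨fun i => mem_Icc.2 ?_, fun i => mem_Icc.2 ?_, he, hb, by lia⟩
    · have := (e i).isLt
      simp only [levelTuple]
      lia
    · have hle : k i ≤ ∑ i, k i := single_le_sum (fun _ _ => Nat.zero_le _) (mem_univ i)
      have := hk i
      simp only [levelTuple]
      lia

theorem levelWeight_extend (q : ℝ) (N : ℤ) {L m : ℕ} {e : Fin m → Fin L} (he : StrictAnti e)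
    (k : Fin m → ℕ) :
    levelWeight q N (extend e k 0) =
      ∏ i, gaussBinom q (N - 2 * ∑ j with j < i, ((e j : ℤ) - e i) * k j) (k i) := by
  have habove (x : Fin L) : ∑ y ∈ Ioi x, ((y : ℤ) - x) * (extend e k 0 y : ℕ) =
      ∑ j with x < e j, ((e j : ℤ) - x) * k j := by
    rw [← filter_lt_eq_Ioi, sum_filter, sum_filter]
    exact sum_extend_zero he.injective k (g := fun y c => if x < y then ((y : ℤ) - x) * c else 0)
      fun y => by simp
  simp only [levelWeight, habove]
  rw [prod_extend_zero he.injective k (g := fun x c =>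
    gaussBinom q (N - 2 * ∑ j with x < e j, ((e j : ℤ) - x) * k j) c) fun x => by simp]
  simp only [he.lt_iff_gt]

theorem tupleWeight_levelTuple (q : ℝ) {N r : ℤ} (hrN : 2 * r ≤ N) {L m : ℕ} {b : ℤ}
    {p : (Fin m → Fin L) × (Fin m → ℕ)} (hp : levelTuple p ∈ levelTuples m L b r) :
    tupleWeight q N (levelTuple p).1 (levelTuple p).2 = levelWeight q N (extend p.1 p.2 0) := by
  obtain ⟨-, -, he, -⟩ := mem_levelTuples.1 hp
  rw [levelWeight_extend q N (strictAnti_levelTuple_fst.1 he), tupleWeight]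
  refine prod_congr rfl fun i _ => ?_
  have hle := sum_sub_mul_le_of_mem_levelTuples hp i
  simp only [levelTuple, add_sub_add_right_eq_sub] at hle ⊢
  exact qbinom_eq_gaussBinom q (by lia) _

theorem sum_levelTuples_tupleWeight (q : ℝ) {N r : ℤ} (hrN : 2 * r ≤ N) {L b : ℕ} (hbL : b ≤ L)
    (m : ℕ) :
    ∑ p ∈ levelTuples m L b r, tupleWeight q N p.1 p.2 =
      ∑ κ ∈ levelConfigs L b (r - b) with #{x | κ x ≠ 0} = m, levelWeight q N κ := by
  rw [← sum_preimage levelTuple _ levelTuple_injective.injOn _ fun p hp h =>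
    absurd (mem_range_levelTuple hp) h]
  refine (sum_congr rfl fun p hp => ?_).trans (sum_extend_of_strictAnti
    (fun e k => mem_preimage.trans (levelTuple_mem_levelTuples hbL)) (levelWeight q N))
  exact tupleWeight_levelTuple q hrN (mem_preimage.1 hp)

theorem card_support_mem_Icc {L b : ℕ} {r : ℤ} (hr : 0 < r) {κ : Fin L → ℕ}
    (hκ : κ ∈ levelConfigs L b (r - b)) : #{x | κ x ≠ 0} ∈ Icc 1 r.toNat := by
  obtain ⟨hparts, hheight⟩ := mem_levelConfigs.1 hκ
  have htotal : ∑ x : Fin L, ((x : ℤ) + 1) * κ x = r := by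
    rw [sum_cast_add_one_mul, hheight, ← hparts, Nat.cast_sum, sub_add_cancel]
  rw [mem_Icc, Nat.one_le_iff_ne_zero, Int.le_toNat hr.le, ← htotal]
  constructor
  · intro hcard
    rw [card_eq_zero, filter_eq_empty_iff] at hcard
    refine hr.ne' (htotal.symm.trans (sum_eq_zero fun x hx => ?_))
    rw [not_not.1 (hcard hx), Nat.cast_zero, mul_zero]
  · rw [card_filter, Nat.cast_sum]
    refine sum_le_sum fun x _ => ?_
    split_ifs with hx
    · push_cast
      nlinarith [Nat.pos_of_ne_zero hx]
    · positivity

theorem sum_sum_levelTuples_tupleWeight (q : ℝ) {N r : ℤ} (hr : 0 < r) (hrN : 2 * r ≤ N) {L b : ℕ}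
    (hbL : b ≤ L) :
    ∑ m ∈ Icc 1 r.toNat, ∑ p ∈ levelTuples m L b r, tupleWeight q N p.1 p.2 =
      levelSum q N L b (r - b) := by
  simp only [sum_levelTuples_tupleWeight q hrN hbL]
  exact sum_fiberwise_of_maps_to (fun κ hκ => card_support_mem_Icc hr hκ) _

end Tuples

theorem sum_Icc_zero_natCast {M : Type*} [AddCommMonoid M] (n : ℕ) (f : ℤ → M) :
    ∑ k ∈ Icc (0 : ℤ) n, f k = ∑ p ∈ antidiagonal n, f p.1 := by
  refine (sum_nbij (fun p : ℕ × ℕ => (p.1 : ℤ)) ?_ ?_ ?_ fun _ _ => rfl).symm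
  · intro p hp
    have := mem_antidiagonal.1 hp
    exact mem_Icc.2 (by lia)
  · exact fun p hp p' hp' h => (HasAntidiagonal.antidiagonal_congr hp hp').2 (Nat.cast_injective h)
  · intro k hk
    have := mem_Icc.1 hk
    exact ⟨(k.toNat, n - k.toNat), mem_antidiagonal.2 (by lia), Int.toNat_of_nonneg this.1⟩

end

/-- Theorem 2 of the paper: for integers `d₀ > d₁ ≥ 1`, the sum over all `m ≥ 1`,
`n₁ > n₂ > ⋯ > n_m > 0`, `k₁, …, k_m > 0`, `k₀ ≥ 0` with `k₀ + k₁ + ⋯ + k_m = d₁` and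
`n₁k₁ + ⋯ + n_mk_m = d₀ - d₁` of
`[2d₀ choose k₁]_q [2d₀ - 2(n₁-n₂)k₁ choose k₂]_q ⋯
 [2d₀ - 2∑_{j<m}(n_j-n_m)k_j choose k_m]_q [2d₁ choose k₀]_q`
equals `([2d₀]_q/[d₀]_q) [d₀ choose d₁]_q [d₀+d₁-1 choose d₀]_q`.
(Each `n_i` satisfies `1 ≤ n_i ≤ d₀ - d₁ ≤ d₀` and each `k_i` satisfies `1 ≤ k_i ≤ d₁ ≤ d₀`,
and `1 ≤ m ≤ d₀ - d₁`, so the finite ranges below lose no terms.) -/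
theorem multivariate_qbinomial_sum_dP1 (q : ℝ) (hq0 : 0 < q) (hq1 : q ≠ 1)
    (d0 d1 : ℤ) (hd1 : 1 ≤ d1) (hd0 : d1 < d0) :
    (∑ m ∈ Finset.Icc 1 (d0 - d1).toNat,
      ∑ k0 ∈ Finset.Icc (0 : ℤ) d1,
        ∑ p ∈ (Fintype.piFinset (fun _ : Fin m => Finset.Icc (1 : ℤ) d0) ×ˢ
               Fintype.piFinset (fun _ : Fin m => Finset.Icc (1 : ℤ) d0)).filter
              (fun p => StrictAnti p.1 ∧ k0 + (∑ i, p.2 i) = d1 ∧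
                (∑ i, p.1 i * p.2 i) = d0 - d1),
          (∏ i : Fin m,
            qbinom q
              (2 * d0 - 2 * ∑ j ∈ Finset.univ.filter (fun j => j < i),
                (p.1 j - p.1 i) * p.2 j)
              (p.2 i)) *
            qbinom q (2 * d1) k0)
    = qint q (2 * d0) / qint q d0 * qbinom q d0 d1 * qbinom q (d0 + d1 - 1) d0 := by
  lift d0 to ℕ using by lia
  lift d1 to ℕ using by lia
  rw [Finset.sum_comm, sum_Icc_zero_natCast]
  calc
    _ = ∑ p ∈ Finset.HasAntidiagonal.antidiagonal d1, gaussBinom q (2 * d0 - 2 * (d0 - d1)) p.1 *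
          levelSum q (2 * d0) d0 p.2 (d0 - d1 - p.2) := by
      refine Finset.sum_congr rfl fun p hp => ?_
      have hp' := Finset.HasAntidiagonal.mem_antidiagonal.1 hp
      have hparts (b : ℤ) : (p.1 : ℤ) + b = d1 ↔ b = p.2 := by lia
      rw [← sum_sum_levelTuples_tupleWeight q (by lia) (by lia) (by lia)]
      simp only [hparts, ← Finset.sum_mul]
      rw [qbinom_eq_gaussBinom q (by lia), show 2 * (d0 : ℤ) - 2 * (d0 - d1) = 2 * d1 by ring]
      exact mul_comm _ _
    _ = levelSum q (2 * d0) (d0 + 1) d1 (d0 - d1) := (levelSum_succ q _ _ _ _).symm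
    _ = _ := by
      obtain ⟨n, rfl⟩ : ∃ n, d1 = n + 1 := ⟨d1 - 1, by lia⟩
      rw [qbinom_eq_gaussBinom q (by lia), qbinom_eq_gaussBinom q (by lia), Nat.cast_add_one,
        levelSum_two_mul hq0 hq1 (by lia), ← add_assoc, add_sub_cancel_right]
end

section
/- Let q be a real number with q > 0 and q ≠ 1, and let d_1 and d_2 be integers with d_1 ≥ 1 and d_2 ≥ 1. Then the (finite) sum over all integers m ≥ 1, all integers n_1 > n_2 > … > n_m > 0, and all integers k_1, …, k_m > 0 satisfying n_1 k_1 + … + n_m k_m = d_1, of the product ∏_{i=1}^{m} [d_2 + 2d_1 + 2∑_{j=1}^{i}(n_i − n_j)k_j choose k_i]_q · [d_2 choose ∑_{j=1}^{m} k_j]_q, equals ([2d_1+d_2]_q/[d_2]_q) · ([d_1+d_2−1 choose d_1]_q)^2. -/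
attribute [local instance] Classical.propDecidable

/-!
Removing one from every part of a partition with `M` parts turns the weighted sum over partitions
of `d` into `M` parts into a convolution of such sums over partitions of `d - M`. The
`q`-Pfaff–Saalschütz identity solves this recurrence in closed form, and a second application of it
performs the remaining sum over `M`.
-/

open Finset

section Antidiagonal

variable {A M : Type*} [AddMonoid A] [HasAntidiagonal A] [AddCommMonoid M]

lemma sum_antidiagonal_antidiagonal_fst (f : A → A → A → M) (n : A) :
    ∑ x ∈ antidiagonal n, ∑ y ∈ antidiagonal x.1, f y.1 y.2 x.2 =
      ∑ x ∈ antidiagonal n, ∑ y ∈ antidiagonal x.2, f x.1 y.1 y.2 := by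
  rw [sum_sigma', sum_sigma']
  refine sum_nbij' (fun ⟨⟨_, l⟩, ⟨j, i⟩⟩ ↦ ⟨(j, i + l), (i, l)⟩)
    (fun ⟨⟨j, _⟩, ⟨i, l⟩⟩ ↦ ⟨(j + i, l), (j, i)⟩) ?_ ?_ ?_ ?_ ?_
  all_goals
    rintro ⟨⟨a, b⟩, ⟨c, d⟩⟩ h
    simp only [mem_sigma, HasAntidiagonal.mem_antidiagonal] at h
    obtain ⟨rfl, rfl⟩ := h
    simp [add_assoc]

end Antidiagonal

section SymmChoose

variable {K : Type*} [Field K] {t : K}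

/-- The symmetric quantum integer `[a] = t ^ a - t ^ (-a)`; the `q`-integer of the paper is the case
`t = √q`. -/
def symmInt (t : K) (a : ℤ) : K := t ^ a - t ^ (-a)

/-- The symmetric quantum factorial `[n]! = [1] [2] ⋯ [n]`. -/
def symmFactorial (t : K) (n : ℕ) : K := ∏ i ∈ range n, symmInt t ((i : ℤ) + 1)

/-- The symmetric Gaussian binomial coefficient with natural entries. It is a Laurent polynomial
in `t`, defined by a Pascal recursion so that roots of unity need not be excluded;
`symmChoose_eq_div` is the quotient of factorials. -/
def symmChoose (t : K) : ℕ → ℕ → K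
  | _, 0 => 1
  | 0, _ + 1 => 0
  | n + 1, k + 1 =>
    t ^ ((k : ℤ) + 1) * symmChoose t n (k + 1) + t ^ ((k : ℤ) - n) * symmChoose t n k

@[simp]
lemma symmChoose_zero_right (t : K) (n : ℕ) : symmChoose t n 0 = 1 := by
  cases n <;> simp [symmChoose]

@[simp]
lemma symmChoose_zero_succ (t : K) (k : ℕ) : symmChoose t 0 (k + 1) = 0 := by
  simp [symmChoose]

lemma symmChoose_succ_succ (t : K) (n k : ℕ) : symmChoose t (n + 1) (k + 1) =
    t ^ ((k : ℤ) + 1) * symmChoose t n (k + 1) + t ^ ((k : ℤ) - n) * symmChoose t n k := by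
  simp [symmChoose]

lemma symmChoose_eq_zero_of_lt (t : K) {n k : ℕ} (h : n < k) : symmChoose t n k = 0 := by
  induction n generalizing k with
  | zero => obtain ⟨k, rfl⟩ := Nat.exists_eq_succ_of_ne_zero h.ne'; simp
  | succ n ih =>
    obtain ⟨k, rfl⟩ := Nat.exists_eq_succ_of_ne_zero (Nat.ne_zero_of_lt h)
    rw [symmChoose_succ_succ, ih (by omega), ih (by omega), mul_zero, mul_zero, add_zero]

@[simp]
lemma symmChoose_self (t : K) (n : ℕ) : symmChoose t n n = 1 := by
  induction n with
  | zero => simp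
  | succ n ih => simp [symmChoose_succ_succ, symmChoose_eq_zero_of_lt t n.lt_succ_self, ih]

lemma symmChoose_vandermonde (ht : t ≠ 0) (m n k : ℕ) : symmChoose t (m + n) k =
    ∑ x ∈ antidiagonal k,
      symmChoose t m x.1 * symmChoose t n x.2 * t ^ ((n : ℤ) * x.1 - m * x.2) := by
  induction n generalizing k with
  | zero =>
    cases k with
    | zero => simp
    | succ k => simp [Nat.sum_antidiagonal_succ']
  | succ n ih =>
    cases k with
    | zero => simp
    | succ k =>
      rw [← add_assoc, symmChoose_succ_succ, ih, ih, Nat.sum_antidiagonal_succ',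
        Nat.sum_antidiagonal_succ', mul_add, mul_sum, mul_sum, add_assoc, ← sum_add_distrib]
      refine congrArg₂ _ ?_ (sum_congr rfl fun x hx ↦ ?_)
      · have hpow : t ^ ((k : ℤ) + 1) * t ^ ((n : ℤ) * ((k + 1 : ℕ) : ℤ) - m * ((0 : ℕ) : ℤ)) =
            t ^ (((n + 1 : ℕ) : ℤ) * ((k + 1 : ℕ) : ℤ) - m * ((0 : ℕ) : ℤ)) := by
          rw [← zpow_add₀ ht]; congr 1; push_cast; ring
        simp only [symmChoose_zero_right]
        linear_combination symmChoose t m (k + 1) * hpow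
      · rw [HasAntidiagonal.mem_antidiagonal] at hx
        subst hx
        have hpow₁ : t ^ (((x.1 + x.2 : ℕ) : ℤ) + 1) *
              t ^ ((n : ℤ) * x.1 - m * ((x.2 + 1 : ℕ) : ℤ)) =
            t ^ ((x.2 : ℤ) + 1) * t ^ (((n + 1 : ℕ) : ℤ) * x.1 - m * ((x.2 + 1 : ℕ) : ℤ)) := by
          rw [← zpow_add₀ ht, ← zpow_add₀ ht]; congr 1; push_cast; ring
        have hpow₂ : t ^ (((x.1 + x.2 : ℕ) : ℤ) - ((m + n : ℕ) : ℤ)) *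
              t ^ ((n : ℤ) * x.1 - m * x.2) =
            t ^ ((x.2 : ℤ) - n) * t ^ (((n + 1 : ℕ) : ℤ) * x.1 - m * ((x.2 + 1 : ℕ) : ℤ)) := by
          rw [← zpow_add₀ ht, ← zpow_add₀ ht]; congr 1; push_cast; ring
        rw [symmChoose_succ_succ]
        linear_combination symmChoose t m x.1 * symmChoose t n (x.2 + 1) * hpow₁ +
          symmChoose t m x.1 * symmChoose t n x.2 * hpow₂

lemma symmChoose_add_add (ht : t ≠ 0) (m i r : ℕ) : symmChoose t (m + i) (r + i) =
    ∑ y ∈ antidiagonal i, symmChoose t m (r + y.2) * symmChoose t i y.1 *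
      t ^ ((i : ℤ) * (r + y.2) - m * y.1) := by
  have hvanish : ∀ x ∈ antidiagonal (r + i),
      symmChoose t m x.1 * symmChoose t i x.2 * t ^ ((i : ℤ) * x.1 - m * x.2) ≠ 0 → r ≤ x.1 := by
    intro x hx hne
    by_contra! hlt
    rw [HasAntidiagonal.mem_antidiagonal] at hx
    exact hne (by rw [symmChoose_eq_zero_of_lt t (by omega : i < x.2), mul_zero, zero_mul])
  rw [symmChoose_vandermonde ht, ← sum_filter_of_ne hvanish,
    Nat.antidiagonal_filter_le_fst_of_le (Nat.le_add_right r i), sum_map,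
    Nat.add_sub_cancel_left, ← Nat.sum_antidiagonal_swap]
  simp [add_comm]

lemma symmInt_add (ht : t ≠ 0) (a b : ℤ) :
    symmInt t (a + b) = t ^ a * symmInt t b + t ^ (-b) * symmInt t a := by
  simp only [symmInt, neg_add, zpow_add₀ ht, zpow_neg]
  ring

lemma symmInt_ne_zero (ht : t ≠ 0) (ht' : ¬IsOfFinOrder t) {a : ℤ} (ha : a ≠ 0) :
    symmInt t a ≠ 0 := by
  intro h
  have hpow : t ^ (a + a) = 1 := by
    rw [symmInt, sub_eq_zero] at h
    rw [zpow_add₀ ht]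
    nth_rw 1 [h]
    rw [← zpow_add₀ ht, neg_add_cancel, zpow_zero]
  have hunit : Units.mk0 t ht ^ (a + a) = 1 := Units.ext (by simpa using hpow)
  exact ht' (Units.isOfFinOrder_val.2 (isOfFinOrder_iff_zpow_eq_one.2 ⟨a + a, by omega, hunit⟩))

@[simp]
lemma symmFactorial_zero (t : K) : symmFactorial t 0 = 1 := by
  simp [symmFactorial]

lemma symmFactorial_succ (t : K) (n : ℕ) :
    symmFactorial t (n + 1) = symmFactorial t n * symmInt t ((n : ℤ) + 1) :=
  prod_range_succ _ _

lemma symmFactorial_ne_zero (ht : t ≠ 0) (ht' : ¬IsOfFinOrder t) (n : ℕ) :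
    symmFactorial t n ≠ 0 :=
  prod_ne_zero_iff.2 fun _ _ ↦ symmInt_ne_zero ht ht' (by omega)

lemma symmFactorial_mul_prod (t : K) (b k : ℕ) :
    symmFactorial t b * ∏ i ∈ range k, symmInt t (((b + k : ℕ) : ℤ) - i) =
      symmFactorial t (b + k) := by
  induction k with
  | zero => simp
  | succ k ih =>
    rw [prod_range_succ', ← add_assoc, symmFactorial_succ, ← ih]
    push_cast
    simp only [add_sub_add_right_eq_sub, sub_zero, mul_assoc]

lemma symmChoose_mul_symmFactorial_mul_symmFactorial (ht : t ≠ 0) (a b : ℕ) :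
    symmChoose t (a + b) a * (symmFactorial t a * symmFactorial t b) =
      symmFactorial t (a + b) := by
  induction a generalizing b with
  | zero => simp
  | succ a iha =>
    induction b with
    | zero => simp
    | succ b ihb =>
      have ha := iha (b + 1)
      rw [← add_assoc, symmFactorial_succ t b] at ha
      rw [add_right_comm, symmFactorial_succ t a] at ihb
      have hint : symmInt t (((a + b + 1 : ℕ) : ℤ) + 1) =
          t ^ ((a : ℤ) + 1) * symmInt t ((b : ℤ) + 1) +
            t ^ ((a : ℤ) - ((a + b + 1 : ℕ) : ℤ)) * symmInt t ((a : ℤ) + 1) := by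
        convert symmInt_add ht ((a : ℤ) + 1) ((b : ℤ) + 1) using 2
        · push_cast; ring
        · push_cast; ring_nf
      rw [← add_assoc (a + 1), add_right_comm a, symmChoose_succ_succ, symmFactorial_succ t a,
        symmFactorial_succ t b, symmFactorial_succ t (a + b + 1), hint]
      linear_combination t ^ ((a : ℤ) + 1) * symmInt t ((b : ℤ) + 1) * ihb +
        t ^ ((a : ℤ) - ((a + b + 1 : ℕ) : ℤ)) * symmInt t ((a : ℤ) + 1) * ha

lemma symmChoose_eq_div (ht : t ≠ 0) (ht' : ¬IsOfFinOrder t) (a b : ℕ) :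
    symmChoose t (a + b) a =
      symmFactorial t (a + b) / (symmFactorial t a * symmFactorial t b) := by
  rw [eq_div_iff (mul_ne_zero (symmFactorial_ne_zero ht ht' a) (symmFactorial_ne_zero ht ht' b)),
    symmChoose_mul_symmFactorial_mul_symmFactorial ht]

lemma symmChoose_symm_add (ht : t ≠ 0) (ht' : ¬IsOfFinOrder t) (a b : ℕ) :
    symmChoose t (a + b) a = symmChoose t (a + b) b := by
  rw [symmChoose_eq_div ht ht', add_comm a b, symmChoose_eq_div ht ht', mul_comm]

lemma symmChoose_mul_symmChoose (ht : t ≠ 0) (ht' : ¬IsOfFinOrder t) (j p i : ℕ) :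
    symmChoose t (j + p) (j + i) * symmChoose t (j + i) j =
      symmChoose t (j + p) j * symmChoose t p i := by
  rcases lt_or_ge p i with h | h
  · rw [symmChoose_eq_zero_of_lt t h, symmChoose_eq_zero_of_lt t (by omega : j + p < j + i),
      zero_mul, mul_zero]
  · obtain ⟨r, rfl⟩ := Nat.exists_eq_add_of_le h
    have hfac := symmFactorial_ne_zero ht ht'
    rw [symmChoose_eq_div ht ht' j (i + r), symmChoose_eq_div ht ht' i r,
      symmChoose_eq_div ht ht' j i, ← add_assoc, symmChoose_eq_div ht ht' (j + i) r]
    field_simp [hfac (j + i), hfac (i + r), hfac j, hfac i, hfac r]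

lemma symmChoose_succ_left_mul_symmInt (ht : t ≠ 0) (ht' : ¬IsOfFinOrder t) (a b : ℕ) :
    symmChoose t (a + b + 1) a * symmInt t ((b : ℤ) + 1) =
      symmChoose t (a + b) a * symmInt t ((a : ℤ) + b + 1) := by
  have ha := symmFactorial_ne_zero ht ht' a
  have hb := symmFactorial_ne_zero ht ht' b
  have hint : symmInt t ((b : ℤ) + 1) ≠ 0 := symmInt_ne_zero ht ht' (by omega)
  rw [symmChoose_eq_div ht ht', add_assoc, symmChoose_eq_div ht ht', ← add_assoc,
    symmFactorial_succ t b, symmFactorial_succ t (a + b)]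
  push_cast
  field_simp

lemma symmChoose_succ_mul_symmInt_succ (ht : t ≠ 0) (ht' : ¬IsOfFinOrder t) (a b : ℕ) :
    symmChoose t (a + b + 1) (a + 1) * symmInt t ((a : ℤ) + 1) =
      symmChoose t (a + b + 1) (b + 1) * symmInt t ((b : ℤ) + 1) := by
  have ha := symmChoose_succ_left_mul_symmInt ht ht' a b
  have hb := symmChoose_succ_left_mul_symmInt ht ht' b a
  rw [add_assoc, symmChoose_symm_add ht ht' a (b + 1)] at ha
  rw [add_assoc, symmChoose_symm_add ht ht' b (a + 1), symmChoose_symm_add ht ht' b a,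
    add_comm b a, add_comm (b : ℤ) a] at hb
  rw [add_assoc a b 1, ha, ← hb, add_left_comm, add_comm b]

lemma sum_antidiagonal_symmChoose_mul (ht : t ≠ 0) (ht' : ¬IsOfFinOrder t) (j p r s : ℕ) :
    ∑ y ∈ antidiagonal s, symmChoose t (j + p) (j + y.1) * symmChoose t (j + y.1) j *
        (symmChoose t r y.2 * t ^ ((r : ℤ) * y.1 - p * y.2)) =
      symmChoose t (j + p) j * symmChoose t (p + r) s := by
  rw [symmChoose_vandermonde ht p r, mul_sum]
  refine sum_congr rfl fun y _ ↦ ?_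
  rw [symmChoose_mul_symmChoose ht ht']
  ring

lemma sum_antidiagonal_symmChoose_mul_symmChoose (ht : t ≠ 0) (ht' : ¬IsOfFinOrder t)
    {P Q j s u : ℕ} (v : ℕ) (h : P + Q = j + s + u) :
    ∑ y ∈ antidiagonal s, symmChoose t P (j + y.1) * symmChoose t Q y.2 *
        (symmChoose t (u + v) (u + (y.1 + y.2)) * symmChoose t (j + y.1) j *
          t ^ (((j : ℤ) + y.1) * ((u : ℤ) + (y.1 + y.2)) - (u + v) * j)) =
      symmChoose t (u + v) u *
        (symmChoose t v s * symmChoose t P j * t ^ ((P : ℤ) * s - v * j)) := by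
  rcases lt_or_ge P j with hj | hj
  · rw [symmChoose_eq_zero_of_lt t hj, mul_zero, zero_mul, mul_zero]
    refine sum_eq_zero fun y _ ↦ ?_
    rw [symmChoose_eq_zero_of_lt t (by omega : P < j + y.1), zero_mul, zero_mul]
  obtain ⟨p, rfl⟩ := Nat.exists_eq_add_of_le hj
  have hpow : ∀ y ∈ antidiagonal s,
      t ^ (((j : ℤ) + y.1) * ((u : ℤ) + (y.1 + y.2)) - (u + v) * j) =
        t ^ (((j + p : ℕ) : ℤ) * s - v * j) * t ^ ((Q : ℤ) * y.1 - p * y.2) := by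
    intro y hy
    rw [HasAntidiagonal.mem_antidiagonal] at hy
    have hQ : (Q : ℤ) = u + s - p := by omega
    rw [← zpow_add₀ ht, hQ, ← hy]
    congr 1
    push_cast
    ring
  calc
    _ = ∑ y ∈ antidiagonal s, symmChoose t (u + v) (u + s) * t ^ (((j + p : ℕ) : ℤ) * s - v * j) *
          (symmChoose t (j + p) (j + y.1) * symmChoose t (j + y.1) j *
            (symmChoose t Q y.2 * t ^ ((Q : ℤ) * y.1 - p * y.2))) := by
      refine sum_congr rfl fun y hy ↦ ?_
      rw [hpow y hy, HasAntidiagonal.mem_antidiagonal.1 hy]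
      ring
    _ = symmChoose t (u + v) (u + s) * t ^ (((j + p : ℕ) : ℤ) * s - v * j) *
          (symmChoose t (j + p) j * symmChoose t (u + s) u) := by
      rw [← mul_sum, sum_antidiagonal_symmChoose_mul ht ht', (by omega : p + Q = u + s),
        symmChoose_symm_add ht ht' u s]
    _ = _ := by
      linear_combination symmChoose t (j + p) j * t ^ (((j + p : ℕ) : ℤ) * s - v * j) *
        symmChoose_mul_symmChoose ht ht' u v s

/-- The `q`-Pfaff–Saalschütz identity: `q`-Vandermonde expands the third factor of each summand,
and collapses the resulting inner and outer sums in turn. -/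
lemma symmChoose_saalschutz (ht : t ≠ 0) (ht' : ¬IsOfFinOrder t) {P Q n u : ℕ} (v : ℕ)
    (h : P + Q = n + u) :
    ∑ x ∈ antidiagonal n,
      symmChoose t P x.1 * symmChoose t Q x.2 * symmChoose t (u + v + x.1) (P + Q) =
    symmChoose t (u + v) u * symmChoose t (v + P) n := by
  have hexpand : ∀ x ∈ antidiagonal n,
      symmChoose t P x.1 * symmChoose t Q x.2 * symmChoose t (u + v + x.1) (P + Q) =
      ∑ y ∈ antidiagonal x.1, symmChoose t P (y.1 + y.2) * symmChoose t Q x.2 *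
        (symmChoose t (u + v) (u + (y.2 + x.2)) * symmChoose t (y.1 + y.2) y.1 *
          t ^ (((y.1 : ℤ) + y.2) * ((u : ℤ) + (y.2 + x.2)) - (u + v) * y.1)) := by
    intro x hx
    rw [HasAntidiagonal.mem_antidiagonal] at hx
    rw [(by omega : P + Q = u + x.2 + x.1), symmChoose_add_add ht, mul_sum]
    refine sum_congr rfl fun y hy ↦ ?_
    rw [HasAntidiagonal.mem_antidiagonal] at hy
    rw [← hy, (by omega : u + x.2 + y.2 = u + (y.2 + x.2))]
    congr 3
    push_cast
    ring
  rw [sum_congr rfl hexpand, sum_antidiagonal_antidiagonal_fst (fun j i l ↦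
    symmChoose t P (j + i) * symmChoose t Q l * (symmChoose t (u + v) (u + (i + l)) *
      symmChoose t (j + i) j * t ^ (((j : ℤ) + i) * ((u : ℤ) + (i + l)) - (u + v) * j))),
    symmChoose_vandermonde ht v P n, mul_sum, ← Nat.sum_antidiagonal_swap]
  refine sum_congr rfl fun x hx ↦ ?_
  rw [HasAntidiagonal.mem_antidiagonal] at hx
  exact sum_antidiagonal_symmChoose_mul_symmChoose ht ht' v (by dsimp; omega)

end SymmChoose

section SymmBinom

variable {K : Type*} [Field K] {t : K}

/-- The symmetric Gaussian binomial coefficient with integer entries, as a quotient of products of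
quantum integers; it is `qbinom` when `t = √q`. -/
noncomputable def symmBinom (t : K) (n k : ℤ) : K :=
  if 0 ≤ k ∧ k ≤ n then
    (∏ i ∈ range k.toNat, symmInt t (n - i)) / ∏ i ∈ range k.toNat, symmInt t (k - i)
  else 0

lemma symmBinom_zero_right (t : K) {n : ℤ} (hn : 0 ≤ n) : symmBinom t n 0 = 1 := by
  simp [symmBinom, hn]

lemma symmBinom_natCast (ht : t ≠ 0) (ht' : ¬IsOfFinOrder t) (n k : ℕ) :
    symmBinom t n k = symmChoose t n k := by
  rw [symmBinom]
  split_ifs with h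
  · obtain ⟨b, rfl⟩ := Nat.exists_eq_add_of_le' (Int.ofNat_le.1 h.2)
    have hnum := symmFactorial_mul_prod t b k
    have hden := symmFactorial_mul_prod t 0 k
    rw [symmFactorial_zero, one_mul, zero_add] at hden
    have hb := symmFactorial_ne_zero ht ht' b
    rw [Int.toNat_natCast, hden, add_comm b, symmChoose_eq_div ht ht', add_comm k, ← hnum,
      mul_comm (symmFactorial t k), mul_div_mul_left _ _ hb]
  · rw [symmChoose_eq_zero_of_lt t (by omega)]

end SymmBinom

section FreqPartitions

variable {m : ℕ} {d : ℤ} {p : (Fin m → ℤ) × (Fin m → ℤ)}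

/-- The partitions of `d` with `m` distinct part sizes, in frequency notation: `p.1` lists the sizes
in decreasing order and `p.2` their multiplicities. -/
noncomputable def freqPartitions (m : ℕ) (d : ℤ) : Finset ((Fin m → ℤ) × (Fin m → ℤ)) :=
  (Fintype.piFinset (fun _ : Fin m ↦ Icc (1 : ℤ) d) ×ˢ
    Fintype.piFinset (fun _ : Fin m ↦ Icc (1 : ℤ) d)).filter
    (fun p ↦ StrictAnti p.1 ∧ (∑ i, p.1 i * p.2 i) = d)

lemma mem_freqPartitions : p ∈ freqPartitions m d ↔
    (∀ i, 1 ≤ p.1 i) ∧ (∀ i, 1 ≤ p.2 i) ∧ StrictAnti p.1 ∧ ∑ i, p.1 i * p.2 i = d := by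
  simp only [freqPartitions, mem_filter, mem_product, Fintype.mem_piFinset, mem_Icc]
  refine ⟨fun ⟨⟨hn, hk⟩, h⟩ ↦ ⟨fun i ↦ (hn i).1, fun i ↦ (hk i).1, h⟩, ?_⟩
  rintro ⟨hn, hk, hanti, rfl⟩
  have hle (i : Fin m) : p.1 i * p.2 i ≤ ∑ j, p.1 j * p.2 j :=
    single_le_sum (f := fun j ↦ p.1 j * p.2 j)
      (fun j _ ↦ mul_nonneg (zero_le_one.trans (hn j)) (zero_le_one.trans (hk j))) (mem_univ i)
  exact ⟨⟨fun i ↦ ⟨hn i, (by nlinarith [hn i, hk i] : _ ≤ p.1 i * p.2 i).trans (hle i)⟩,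
    fun i ↦ ⟨hk i, (by nlinarith [hn i, hk i] : _ ≤ p.1 i * p.2 i).trans (hle i)⟩⟩, hanti, rfl⟩

lemma card_le_sum_of_mem_freqPartitions (hp : p ∈ freqPartitions m d) : (m : ℤ) ≤ ∑ i, p.2 i := by
  simpa using sum_le_sum fun i (_ : i ∈ univ) ↦ (mem_freqPartitions.1 hp).2.1 i

lemma sum_le_of_mem_freqPartitions (hp : p ∈ freqPartitions m d) : ∑ i, p.2 i ≤ d := by
  obtain ⟨hn, hk, -, rfl⟩ := mem_freqPartitions.1 hp
  exact sum_le_sum fun i _ ↦ le_mul_of_one_le_left (zero_le_one.trans (hk i)) (hn i)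

lemma freqPartitions_zero (d : ℤ) : freqPartitions 0 d = if d = 0 then {default} else ∅ := by
  ext p
  split_ifs with h <;>
    simp [mem_freqPartitions, Subsingleton.elim p default, Subsingleton.strictAnti, eq_comm, h]

lemma strictAnti_snoc {α : Type*} [Preorder α] {f : Fin m → α} {a : α} :
    StrictAnti (Fin.snoc (α := fun _ ↦ α) f a) ↔ StrictAnti f ∧ ∀ i, a < f i := by
  simp [StrictAnti, Fin.forall_fin_succ', forall_and, (Fin.le_last _).not_gt, and_comm]

/-- Enlarge every part of a partition by one and adjoin `c` parts equal to one. -/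
def adjoinOnes (c : ℤ) (p : (Fin m → ℤ) × (Fin m → ℤ)) :
    (Fin (m + 1) → ℤ) × (Fin (m + 1) → ℤ) :=
  (Fin.snoc (p.1 + 1) 1, Fin.snoc p.2 c)

lemma adjoinOnes_mem_freqPartitions {c : ℤ} :
    adjoinOnes c p ∈ freqPartitions (m + 1) (d + (∑ i, p.2 i + c)) ↔
      1 ≤ c ∧ p ∈ freqPartitions m d := by
  have hanti : StrictAnti (p.1 + 1) ↔ StrictAnti p.1 := by simp [StrictAnti]
  have hsum : ∑ i, p.1 i * p.2 i + ∑ i, p.2 i + c = d + (∑ i, p.2 i + c) ↔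
      ∑ i, p.1 i * p.2 i = d := by rw [add_assoc, add_left_inj]
  simp only [mem_freqPartitions, adjoinOnes, strictAnti_snoc, hanti, Fin.forall_fin_succ',
    Fin.sum_univ_castSucc, Fin.snoc_castSucc, Fin.snoc_last, Pi.add_apply, Pi.one_apply, add_mul,
    one_mul, sum_add_distrib, hsum, lt_add_iff_pos_left, le_add_iff_nonneg_left, le_refl, and_true]
  exact ⟨fun ⟨_, ⟨hk, hc⟩, ⟨hanti, hn⟩, hd⟩ ↦ ⟨hc, hn, hk, hanti, hd⟩,
    fun ⟨hc, hn, hk, hanti, hd⟩ ↦ ⟨fun i ↦ zero_le_one.trans (hn i), ⟨hk, hc⟩, ⟨hanti, hn⟩, hd⟩⟩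

@[simp]
lemma adjoinOnes_fst_last (c : ℤ) (p : (Fin m → ℤ) × (Fin m → ℤ)) :
    (adjoinOnes c p).1 (Fin.last m) = 1 := by
  simp [adjoinOnes]

@[simp]
lemma sum_adjoinOnes_snd (c : ℤ) (p : (Fin m → ℤ) × (Fin m → ℤ)) :
    ∑ i, (adjoinOnes c p).2 i = ∑ i, p.2 i + c := by
  simp [adjoinOnes, Fin.sum_univ_castSucc]

lemma init_adjoinOnes (c : ℤ) (p : (Fin m → ℤ) × (Fin m → ℤ)) :
    (Fin.init (adjoinOnes c p).1 - 1, Fin.init (adjoinOnes c p).2) = p := by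
  simp [adjoinOnes]

lemma exists_adjoinOnes_eq {p : (Fin (m + 1) → ℤ) × (Fin (m + 1) → ℤ)}
    (hp : p ∈ freqPartitions (m + 1) (d + ∑ i, p.2 i)) (hlast : p.1 (Fin.last m) = 1) :
    ∃ c, 1 ≤ c ∧ ∃ p' ∈ freqPartitions m d, adjoinOnes c p' = p := by
  have hinit : adjoinOnes (p.2 (Fin.last m)) (Fin.init p.1 - 1, Fin.init p.2) = p := by
    simp only [adjoinOnes, sub_add_cancel, ← hlast, Fin.snoc_init_self]
  rw [← hinit, sum_adjoinOnes_snd, adjoinOnes_mem_freqPartitions] at hp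
  exact ⟨_, hp.1, _, hp.2, hinit⟩

lemma add_one_mem_freqPartitions {p : (Fin (m + 1) → ℤ) × (Fin (m + 1) → ℤ)} :
    (p.1 + 1, p.2) ∈ freqPartitions (m + 1) (d + ∑ i, p.2 i) ∧ p.1 (Fin.last m) + 1 ≠ 1 ↔
      p ∈ freqPartitions (m + 1) d := by
  have hanti : StrictAnti (p.1 + 1) ↔ StrictAnti p.1 := by simp [StrictAnti]
  simp only [mem_freqPartitions, hanti, Pi.add_apply, Pi.one_apply, add_mul, one_mul,
    sum_add_distrib, add_left_inj, le_add_iff_nonneg_left, ne_eq, add_eq_right]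
  refine ⟨fun ⟨⟨hn, hk, hanti, hd⟩, hlast⟩ ↦ ⟨fun i ↦ ?_, hk, hanti, hd⟩,
    fun ⟨hn, hk, hanti, hd⟩ ↦
      ⟨⟨fun i ↦ zero_le_one.trans (hn i), hk, hanti, hd⟩, (one_pos.trans_le (hn _)).ne'⟩⟩
  have hle := hanti.antitone (Fin.le_last i)
  have hpos := hn (Fin.last m)
  omega

end FreqPartitions

section FreqSum

variable {K : Type*} [Field K] {t : K} {m : ℕ}

/-- The weight of a partition in frequency notation, with free parameter `N`: the product of
Gaussian binomial coefficients in the theorem, where `N = d₂ + 2 d₁`. -/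
noncomputable def freqWeight (t : K) (N : ℤ) (p : (Fin m → ℤ) × (Fin m → ℤ)) : K :=
  ∏ i : Fin m, symmBinom t
    (N + 2 * ∑ j ∈ univ.filter (fun j ↦ j ≤ i), (p.1 i - p.1 j) * p.2 j) (p.2 i)

lemma freqWeight_add_one (t : K) (N : ℤ) (n k : Fin m → ℤ) :
    freqWeight t N (n + 1, k) = freqWeight t N (n, k) := by
  simp [freqWeight]

lemma freqWeight_adjoinOnes (t : K) (N c : ℤ) (p : (Fin m → ℤ) × (Fin m → ℤ)) :
    freqWeight t N (adjoinOnes c p) =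
      freqWeight t N p * symmBinom t (N - 2 * ∑ i, p.1 i * p.2 i) c := by
  simp [freqWeight, adjoinOnes, Fin.prod_univ_castSucc, Fin.sum_univ_castSucc, sum_filter,
    Fin.le_last, sub_eq_add_neg]

/-- The total weight of the partitions of `d` into `M` parts having `m` distinct sizes. -/
noncomputable def freqSum (t : K) (N : ℤ) (m : ℕ) (d M : ℤ) : K :=
  ∑ p ∈ freqPartitions m d with ∑ i, p.2 i = M, freqWeight t N p

lemma freqSum_eq_zero_of_lt (t : K) (N d : ℤ) {M : ℤ} (h : M < m) : freqSum t N m d M = 0 := by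
  refine sum_eq_zero fun p hp ↦ absurd h (not_lt.2 ?_)
  rw [mem_filter] at hp
  exact hp.2 ▸ card_le_sum_of_mem_freqPartitions hp.1

lemma freqSum_eq_zero_of_sum_lt (t : K) (N : ℤ) (m : ℕ) {d M : ℤ} (h : d < M) :
    freqSum t N m d M = 0 := by
  refine sum_eq_zero fun p hp ↦ absurd h (not_lt.2 ?_)
  rw [mem_filter] at hp
  exact hp.2 ▸ sum_le_of_mem_freqPartitions hp.1

lemma freqSum_zero (t : K) (N d M : ℤ) :
    freqSum t N 0 d M = if d = 0 ∧ M = 0 then 1 else 0 := by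
  rw [freqSum, freqPartitions_zero]
  split_ifs <;> simp_all [freqWeight, filter_singleton, eq_comm]

lemma sum_filter_last_ne_one (t : K) (N : ℤ) (m : ℕ) (d M : ℤ) :
    ∑ p ∈ freqPartitions (m + 1) (d + M) with ∑ i, p.2 i = M ∧ p.1 (Fin.last m) ≠ 1,
      freqWeight t N p = freqSum t N (m + 1) d M := by
  refine (sum_equiv ((Equiv.addRight 1).prodCongr (.refl _)) (fun p ↦ ?_)
    fun p _ ↦ (freqWeight_add_one t N p.1 p.2).symm).symm
  simp only [mem_filter, Equiv.prodCongr_apply, Prod.map_apply', Equiv.coe_addRight,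
    Equiv.refl_apply, Pi.add_apply, Pi.one_apply, ← add_one_mem_freqPartitions (p := p)]
  constructor
  · rintro ⟨⟨hp, hlast⟩, rfl⟩
    exact ⟨hp, rfl, hlast⟩
  · rintro ⟨hp, rfl, hlast⟩
    exact ⟨⟨hp, hlast⟩, rfl⟩

lemma sum_filter_last_eq_one (t : K) (N : ℤ) (m : ℕ) (d : ℤ) (v : ℕ) :
    ∑ p ∈ freqPartitions (m + 1) (d + (v + 1 : ℕ)) with
        ∑ i, p.2 i = ((v + 1 : ℕ) : ℤ) ∧ p.1 (Fin.last m) = 1, freqWeight t N p =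
      ∑ x ∈ antidiagonal v, freqSum t N m d x.1 * symmBinom t (N - 2 * d) (x.2 + 1 : ℕ) := by
  simp only [freqSum, sum_mul]
  rw [sum_sigma', eq_comm]
  refine sum_bij (fun x _ ↦ adjoinOnes (x.1.2 + 1 : ℕ) x.2) ?_ ?_ ?_ ?_
  · rintro ⟨x, p⟩ h
    simp only [mem_sigma, HasAntidiagonal.mem_antidiagonal, mem_filter] at h ⊢
    obtain ⟨rfl, hp, hM⟩ := h
    have hv : ((x.1 + x.2 + 1 : ℕ) : ℤ) = ∑ i, p.2 i + (x.2 + 1 : ℕ) := by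
      rw [hM]; push_cast; ring
    rw [hv, adjoinOnes_mem_freqPartitions]
    exact ⟨⟨by omega, hp⟩, by simp, by simp⟩
  · rintro ⟨x, p⟩ hx ⟨y, p'⟩ hy h
    simp only [mem_sigma, HasAntidiagonal.mem_antidiagonal, mem_filter] at hx hy
    obtain rfl : p = p' := by rw [← init_adjoinOnes _ p, h, init_adjoinOnes]
    have hxy : x = y := Prod.ext (by omega) (by omega)
    rw [hxy]
  · intro p hp
    simp only [mem_filter] at hp
    obtain ⟨hp, hM, hlast⟩ := hp
    obtain ⟨c, hc, p', hp', rfl⟩ := exists_adjoinOnes_eq (hM ▸ hp) hlast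
    rw [sum_adjoinOnes_snd] at hM
    have hcard := card_le_sum_of_mem_freqPartitions hp'
    lift c to ℕ using by omega
    refine ⟨⟨(v + 1 - c, c - 1), p'⟩, ?_, ?_⟩
    · simp only [mem_sigma, HasAntidiagonal.mem_antidiagonal, mem_filter]
      exact ⟨by omega, hp', by omega⟩
    · simp only
      rw [Nat.sub_add_cancel (by omega)]
  · rintro ⟨x, p⟩ h
    simp only [mem_sigma, mem_filter, mem_freqPartitions] at h
    rw [freqWeight_adjoinOnes, h.2.1.2.2.2]

/-- Removing one from every part leaves either as many sizes as before or, if `1` was a part, one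
size fewer. -/
lemma freqSum_succ (t : K) (N : ℤ) (m : ℕ) (d : ℤ) (v : ℕ) :
    freqSum t N (m + 1) (d + (v + 1 : ℕ)) (v + 1 : ℕ) = freqSum t N (m + 1) d (v + 1 : ℕ) +
      ∑ x ∈ antidiagonal v, freqSum t N m d x.1 * symmBinom t (N - 2 * d) (x.2 + 1 : ℕ) := by
  rw [← sum_filter_last_eq_one, ← sum_filter_last_ne_one t N m d, freqSum]
  simp only [← filter_filter]
  rw [sum_filter_not_add_sum_filter]

/-- The total weight of the partitions of `d` into `M` parts, which have at most `M` sizes. -/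
noncomputable def partitionSum (t : K) (N d : ℤ) (M : ℕ) : K :=
  ∑ m ∈ range (M + 1), freqSum t N m d M

lemma sum_range_freqSum (t : K) (N d : ℤ) {M R : ℕ} (h : M < R) :
    ∑ m ∈ range R, freqSum t N m d M = partitionSum t N d M := by
  refine (sum_subset (range_subset_range.2 h) fun m _ hm ↦ ?_).symm
  rw [mem_range] at hm
  exact freqSum_eq_zero_of_lt t N d (by omega)

lemma partitionSum_eq_zero_of_lt (t : K) (N : ℤ) {d : ℤ} {M : ℕ} (h : d < M) :
    partitionSum t N d M = 0 :=
  sum_eq_zero fun m _ ↦ freqSum_eq_zero_of_sum_lt t N m h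

lemma partitionSum_zero_right (t : K) (N d : ℤ) :
    partitionSum t N d 0 = if d = 0 then 1 else 0 := by
  simp [partitionSum, freqSum_zero]

lemma partitionSum_zero_left (t : K) (N : ℤ) (M : ℕ) :
    partitionSum t N 0 M = if M = 0 then 1 else 0 := by
  cases M with
  | zero => simp [partitionSum_zero_right]
  | succ v => simp [partitionSum_eq_zero_of_lt t N (by omega : (0 : ℤ) < (v + 1 : ℕ))]

lemma partitionSum_add (t : K) {N d : ℤ} (h : 2 * d ≤ N) (M : ℕ) :
    partitionSum t N (d + M) M =
      ∑ x ∈ antidiagonal M, partitionSum t N d x.1 * symmBinom t (N - 2 * d) x.2 := by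
  cases M with
  | zero => simp [symmBinom_zero_right t (sub_nonneg.2 h)]
  | succ v =>
    have hpeel : ∑ m ∈ range (v + 1), ∑ x ∈ antidiagonal v,
          freqSum t N m d x.1 * symmBinom t (N - 2 * d) (x.2 + 1 : ℕ) =
        ∑ x ∈ antidiagonal v, partitionSum t N d x.1 * symmBinom t (N - 2 * d) (x.2 + 1 : ℕ) := by
      rw [sum_comm]
      refine sum_congr rfl fun x hx ↦ ?_
      rw [HasAntidiagonal.mem_antidiagonal] at hx
      rw [← sum_mul, sum_range_freqSum t N d (by omega)]
    rw [Nat.sum_antidiagonal_succ', Nat.cast_zero, symmBinom_zero_right t (sub_nonneg.2 h), mul_one,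
      partitionSum, partitionSum, sum_range_succ', sum_range_succ' _ (v + 1), freqSum_zero,
      freqSum_zero, if_neg (by omega), if_neg (by omega), ← hpeel]
    simp only [freqSum_succ, sum_add_distrib, add_zero]

end FreqSum

section ClosedForm

variable {K : Type*} [Field K] {t : K}

lemma partitionSum_self (t : K) {N : ℤ} (hN : 0 ≤ N) (M : ℕ) :
    partitionSum t N M M = symmBinom t N M := by
  have hadd := partitionSum_add t (by omega : 2 * 0 ≤ N) M
  rw [zero_add, mul_zero, sub_zero] at hadd
  rw [hadd, sum_eq_single_of_mem (0, M) (by simp)]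
  · simp [partitionSum_zero_left]
  · intro x hx hne
    rw [HasAntidiagonal.mem_antidiagonal] at hx
    rw [partitionSum_zero_left, if_neg (fun h ↦ hne (Prod.ext h (by dsimp; omega))), zero_mul]

lemma partitionSum_self_eq (ht : t ≠ 0) (ht' : ¬IsOfFinOrder t) (a : ℕ) {M : ℕ} (hM : 0 < M) :
    partitionSum t (a + 2 * M) M M =
      symmInt t (a + 2 * M) / symmInt t M * symmChoose t (a + M + M - 1) (a + M) := by
  obtain ⟨v, rfl⟩ : ∃ v, M = v + 1 := Nat.exists_eq_add_of_le' hM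
  have hsucc := symmChoose_succ_left_mul_symmInt ht ht' (a + (v + 1)) v
  have hint : ((a + (v + 1) : ℕ) : ℤ) + v + 1 = a + 2 * (v + 1 : ℕ) := by push_cast; ring
  have hN : (a : ℤ) + 2 * (v + 1 : ℕ) = (a + (v + 1) + (v + 1) : ℕ) := by push_cast; ring
  rw [add_assoc _ v 1, symmChoose_symm_add ht ht' (a + (v + 1)) (v + 1), hint] at hsucc
  rw [partitionSum_self t (by omega), div_mul_eq_mul_div,
    eq_div_iff (symmInt_ne_zero ht ht' (by omega)), mul_comm (symmInt t _), ← add_assoc _ v 1,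
    Nat.add_sub_cancel, ← hsucc, hN, symmBinom_natCast ht ht', Nat.cast_succ]

lemma sum_antidiagonal_closedForm (ht : t ≠ 0) (ht' : ¬IsOfFinOrder t) (a : ℕ) {e M : ℕ}
    (he : 0 < e) (hM : 0 < M) :
    (∑ x ∈ antidiagonal M, symmChoose t e x.1 * symmChoose t (a + 2 * M) x.2 *
        symmChoose t (a + 2 * M + e + x.1 - 1) (a + 2 * M + e)) / symmInt t e =
      symmChoose t (e + M) M * symmChoose t (a + (e + M) + M - 1) (a + (e + M)) /
        symmInt t (e + M) := by
  obtain ⟨c, rfl⟩ : ∃ c, e = c + 1 := Nat.exists_eq_add_of_le' he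
  obtain ⟨v, rfl⟩ : ∃ v, M = v + 1 := Nat.exists_eq_add_of_le' hM
  have hsaal := symmChoose_saalschutz ht ht' (P := c + 1) (Q := a + 2 * (v + 1)) (n := v + 1)
    (u := a + (c + 1 + (v + 1))) v (by ring)
  have hsucc := symmChoose_succ_left_mul_symmInt ht ht' (v + 1) c
  have hindex (i : ℕ) : a + 2 * (v + 1) + (c + 1) + i - 1 = a + (c + 1 + (v + 1)) + v + i := by
    omega
  have hint : ((v + 1 : ℕ) : ℤ) + c + 1 = (c + 1 : ℕ) + (v + 1 : ℕ) := by push_cast; ring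
  rw [hint, ← Nat.cast_succ, (by omega : v + 1 + c + 1 = c + 1 + (v + 1))] at hsucc
  rw [add_comm (c + 1) (a + 2 * (v + 1))] at hsaal
  simp only [hindex, hsaal]
  rw [div_eq_div_iff (symmInt_ne_zero ht ht' (by omega)) (symmInt_ne_zero ht ht' (by omega)),
    (by omega : v + (c + 1) = v + 1 + c),
    (by omega : a + (c + 1 + (v + 1)) + (v + 1) - 1 = a + (c + 1 + (v + 1)) + v)]
  linear_combination
    -symmChoose t (a + (c + 1 + (v + 1)) + v) (a + (c + 1 + (v + 1))) * hsucc

lemma partitionSum_eq (ht : t ≠ 0) (ht' : ¬IsOfFinOrder t) {d : ℕ} (hd : 0 < d) (a M : ℕ) :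
    partitionSum t (a + 2 * d) d M = symmInt t (a + 2 * d) / symmInt t d *
      (symmChoose t d M * symmChoose t (a + d + M - 1) (a + d)) := by
  induction d using Nat.strong_induction_on generalizing a M with
  | _ d ih =>
    obtain rfl | hM := Nat.eq_zero_or_pos M
    · rw [partitionSum_zero_right, if_neg (by omega),
        symmChoose_eq_zero_of_lt t (by omega : a + d + 0 - 1 < a + d), mul_zero, mul_zero]
    obtain h | rfl | h := lt_trichotomy d M
    · rw [partitionSum_eq_zero_of_lt t _ (by omega), symmChoose_eq_zero_of_lt t h, zero_mul,
        mul_zero]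
    · rw [partitionSum_self_eq ht ht' a hd, symmChoose_self, one_mul]
    obtain ⟨e, rfl⟩ := Nat.exists_eq_add_of_le' h.le
    have he : 0 < e := by omega
    have hN : (a : ℤ) + 2 * (e + M) = (a + 2 * M : ℕ) + 2 * e := by push_cast; ring
    calc
      _ = ∑ x ∈ antidiagonal M, partitionSum t ((a + 2 * M : ℕ) + 2 * e) e x.1 *
            symmBinom t (a + 2 * M : ℕ) x.2 := by
        rw [Nat.cast_add e, hN, partitionSum_add t (by omega), add_sub_cancel_right]
      _ = symmInt t ((a + 2 * M : ℕ) + 2 * e) *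
          ((∑ x ∈ antidiagonal M, symmChoose t e x.1 * symmChoose t (a + 2 * M) x.2 *
            symmChoose t (a + 2 * M + e + x.1 - 1) (a + 2 * M + e)) / symmInt t e) := by
        rw [sum_div, mul_sum]
        refine sum_congr rfl fun x _ ↦ ?_
        rw [ih e (by omega) he, symmBinom_natCast ht ht']
        ring
      _ = _ := by
        rw [sum_antidiagonal_closedForm ht ht' a he hM, Nat.cast_add e, hN]
        ring

end ClosedForm

section Total

variable {K : Type*} [Field K] {t : K}

lemma sum_freqPartitions (t : K) (N : ℤ) (m d : ℕ) (f : ℤ → K) :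
    ∑ p ∈ freqPartitions m d, freqWeight t N p * f (∑ i, p.2 i) =
      ∑ M ∈ range (d + 1), freqSum t N m d M * f M := by
  have hbound : ∀ p ∈ freqPartitions m d, 0 ≤ ∑ i, p.2 i ∧ ∑ i, p.2 i ≤ d := fun p hp ↦
    ⟨(Int.natCast_nonneg m).trans (card_le_sum_of_mem_freqPartitions hp),
      sum_le_of_mem_freqPartitions hp⟩
  rw [← sum_fiberwise_of_maps_to (t := range (d + 1)) (g := fun p ↦ (∑ i, p.2 i).toNat)]
  · refine sum_congr rfl fun M _ ↦ ?_
    rw [freqSum, sum_mul]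
    refine sum_congr (filter_congr fun p hp ↦ ?_) fun p hp ↦ by rw [(mem_filter.1 hp).2]
    have := hbound p hp
    omega
  · intro p hp
    have := hbound p hp
    rw [mem_range]
    omega

lemma sum_Icc_freqSum (t : K) (N : ℤ) {d M : ℕ} (hd : 0 < d) (hM : M ≤ d) :
    ∑ m ∈ Icc 1 d, freqSum t N m d M = partitionSum t N d M := by
  rw [← sum_range_freqSum t N d (Nat.lt_succ_of_le hM), sum_range_succ', freqSum_zero,
    if_neg (by omega), add_zero, range_eq_Ico, sum_Ico_add' (fun m ↦ freqSum t N m d M) 0 d 1,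
    zero_add, Ico_add_one_right_eq_Icc]

lemma sum_range_symmChoose_mul (ht : t ≠ 0) (ht' : ¬IsOfFinOrder t) (a c : ℕ) :
    ∑ M ∈ range (c + 1 + 1), symmChoose t (c + 1) M *
        symmChoose t (a + (c + 1) + M - 1) (a + (c + 1)) * symmChoose t a M =
      symmChoose t (a + c) a * symmChoose t (a + c) (c + 1) := by
  have hsaal := symmChoose_saalschutz ht ht' (P := a) (Q := c + 1) (n := c + 1) (u := a) c
    (add_comm a (c + 1))
  rw [Nat.sum_antidiagonal_eq_sum_range_succ_mk, add_comm c a] at hsaal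
  rw [← hsaal]
  refine sum_congr rfl fun M hM ↦ ?_
  obtain ⟨k, hk⟩ := Nat.exists_eq_add_of_le (Nat.lt_succ_iff.1 (mem_range.1 hM))
  have hsymm : symmChoose t (c + 1) M = symmChoose t (c + 1) (c + 1 - M) := by
    rw [hk, Nat.add_sub_cancel_left, symmChoose_symm_add ht ht']
  rw [hsymm, (by omega : a + (c + 1) + M - 1 = a + c + M)]
  ring

theorem multivariate_qbinomial_sum_F0_general (ht : t ≠ 0) (ht' : ¬IsOfFinOrder t)
    (d1 d2 : ℤ) (hd1 : 1 ≤ d1) (hd2 : 1 ≤ d2) :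
    ∑ m ∈ Icc 1 d1.toNat, ∑ p ∈ freqPartitions m d1,
        freqWeight t (d2 + 2 * d1) p * symmBinom t d2 (∑ j, p.2 j) =
      symmInt t (2 * d1 + d2) / symmInt t d2 * symmBinom t (d1 + d2 - 1) d1 ^ 2 := by
  obtain ⟨c, rfl⟩ : ∃ c : ℕ, d1 = (c + 1 : ℕ) := ⟨(d1 - 1).toNat, by omega⟩
  obtain ⟨b, rfl⟩ : ∃ b : ℕ, d2 = (b + 1 : ℕ) := ⟨(d2 - 1).toNat, by omega⟩
  calc
    _ = ∑ M ∈ range (c + 1 + 1), partitionSum t ((b + 1 : ℕ) + 2 * (c + 1 : ℕ)) (c + 1 : ℕ) M *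
          symmChoose t (b + 1) M := by
      simp only [Int.toNat_natCast, sum_freqPartitions]
      rw [sum_comm]
      refine sum_congr rfl fun M hM ↦ ?_
      rw [← sum_mul, sum_Icc_freqSum t _ c.succ_pos (Nat.lt_succ_iff.1 (mem_range.1 hM)),
        symmBinom_natCast ht ht']
    _ = symmInt t ((b + 1 : ℕ) + 2 * (c + 1 : ℕ)) / symmInt t (c + 1 : ℕ) *
          (symmChoose t (b + 1 + c) (b + 1) * symmChoose t (b + 1 + c) (c + 1)) := by
      rw [← sum_range_symmChoose_mul ht ht', mul_sum]
      refine sum_congr rfl fun M _ ↦ ?_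
      rw [partitionSum_eq ht ht' c.succ_pos]
      ring
    _ = _ := by
      have hcomm := symmChoose_succ_mul_symmInt_succ ht ht' b c
      have hindex : ((c + 1 : ℕ) : ℤ) + (b + 1 : ℕ) - 1 = (b + c + 1 : ℕ) := by push_cast; ring
      rw [hindex, symmBinom_natCast ht ht', add_right_comm b 1 c, div_mul_eq_mul_div,
        div_mul_eq_mul_div, div_eq_div_iff (symmInt_ne_zero ht ht' (by omega))
          (symmInt_ne_zero ht ht' (by omega)), add_comm (2 * ((c + 1 : ℕ) : ℤ))]
      push_cast
      linear_combination symmInt t ((b : ℤ) + 1 + 2 * (c + 1)) *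
        symmChoose t (b + c + 1) (c + 1) * hcomm

end Total

lemma qint_eq_symmInt {q : ℝ} (hq : 0 < q) (a : ℤ) : qint q a = symmInt √q a := by
  rw [qint, symmInt, Real.sqrt_eq_rpow, ← Real.rpow_intCast, ← Real.rpow_intCast,
    ← Real.rpow_mul hq.le, ← Real.rpow_mul hq.le]
  congr 2 <;> push_cast <;> ring

lemma qbinom_eq_symmBinom {q : ℝ} (hq : 0 < q) (n k : ℤ) :
    qbinom q n k = symmBinom √q n k := by
  simp only [qbinom, symmBinom, qint_eq_symmInt hq]

lemma not_isOfFinOrder_sqrt {q : ℝ} (hq : q ≠ 1) : ¬IsOfFinOrder √q := fun h ↦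
  hq (Real.sqrt_eq_one.1 (h.eq_one (Real.sqrt_nonneg q)))

/-- Theorem 3 of the paper: for integers `d₁ ≥ 1` and `d₂ ≥ 1`, the sum over all `m ≥ 1`,
`n₁ > n₂ > ⋯ > n_m > 0`, `k₁, …, k_m > 0` with `n₁k₁ + ⋯ + n_mk_m = d₁` of
`∏_{i=1}^m [d₂ + 2d₁ + 2∑_{j≤i}(n_i-n_j)k_j choose k_i]_q · [d₂ choose ∑_j k_j]_q`
equals `([2d₁+d₂]_q/[d₂]_q) ([d₁+d₂-1 choose d₁]_q)²`.
(Each `n_i`, `k_i` satisfies `1 ≤ n_i, k_i ≤ d₁` and `1 ≤ m ≤ d₁`, so the finite ranges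
below lose no terms.) -/
theorem multivariate_qbinomial_sum_F0 (q : ℝ) (hq0 : 0 < q) (hq1 : q ≠ 1)
    (d1 d2 : ℤ) (hd1 : 1 ≤ d1) (hd2 : 1 ≤ d2) :
    (∑ m ∈ Finset.Icc 1 d1.toNat,
      ∑ p ∈ (Fintype.piFinset (fun _ : Fin m => Finset.Icc (1 : ℤ) d1) ×ˢ
             Fintype.piFinset (fun _ : Fin m => Finset.Icc (1 : ℤ) d1)).filter
            (fun p => StrictAnti p.1 ∧ (∑ i, p.1 i * p.2 i) = d1),
        (∏ i : Fin m,
          qbinom q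
            (d2 + 2 * d1 + 2 * ∑ j ∈ Finset.univ.filter (fun j => j ≤ i),
              (p.1 i - p.1 j) * p.2 j)
            (p.2 i)) *
          qbinom q d2 (∑ j, p.2 j))
    = qint q (2 * d1 + d2) / qint q d2 * (qbinom q (d1 + d2 - 1) d1) ^ 2 := by
  simp only [qint_eq_symmInt hq0, qbinom_eq_symmBinom hq0]
  exact multivariate_qbinomial_sum_F0_general (Real.sqrt_ne_zero'.2 hq0) (not_isOfFinOrder_sqrt hq1)
    d1 d2 hd1 hd2
end
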